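/- Let n ≥ 5 and let P be the regular n-gon on the unit circle, i.e. p_i = (cos(2πi/n), sin(2πi/n)) for i = 0, …, n−1. A triangulation τ of P is length maximal if and only if τ has exactly two ears (equivalently, the dual tree of τ is a path). In particular, any two triangulations of P having exactly two ears have the same sorted list of diagonal lengths. -/

import Mathlib

/-!
Cut open at a vertex, the diagonals of a triangulation become pairs `x < y` of naturals, no two
interleaved. At most `n - 3` such pairs are possible (`NonCrossing.card_le`), so a triangulation
contains every diagonal that crosses none of its members, and a shortest diagonal below a given
one must be an ear (`NonCrossing.exists_ear`). The cutting vertex being arbitrary, there is an ear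
on each side of every diagonal; in particular there are at least two ears.

If there are exactly two, cut at the tip of one of them: every diagonal passes over the tip of the
other, so the diagonals are nested, and their spans `y - x` are distinct, hence are
`2, …, n - 2`, each once (`exists_spans`). This determines the sorted list of lengths
`2 sin (π k / n)`.

The ears are the diagonals of least length, so a triangulation with three or more ears has more
copies of the least length than one with two, and a lexicographically smaller list
(`lex_of_ears_lt`). The fan from a vertex shows that two ears do occur.
-/

/-- The point on the unit circle of `ℝ²` at angle `θ`. -/
noncomputable def pt (θ : ℝ) : EuclideanSpace ℝ (Fin 2) :=
  (WithLp.equiv 2 (Fin 2 → ℝ)).symm ![Real.cos θ, Real.sin θ]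

variable {n : ℕ} [NeZero n]

/-- `k` lies strictly between `i` and `j` in counterclockwise cyclic order. -/
def CcwBtw (i k j : ZMod n) : Prop :=
  0 < (k - i).val ∧ (k - i).val < (j - i).val

/-- `d` is a diagonal of the convex polygon on indices `ZMod n`. -/
def IsDiag (d : Sym2 (ZMod n)) : Prop :=
  ∃ i j : ZMod n, d = s(i, j) ∧ j ≠ i - 1 ∧ j ≠ i ∧ j ≠ i + 1

/-- `d` is a chord, i.e. a pair of cyclically consecutive indices. -/
def IsChord (d : Sym2 (ZMod n)) : Prop :=
  ∃ i : ZMod n, d = s(i, i + 1)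

/-- Two diagonals `{i, j}` and `{k, l}` cross if exactly one of `k`, `l` lies
strictly between `i` and `j` in cyclic order (equivalently, one of them lies
strictly in the arc from `i` to `j` and the other strictly in the arc from `j`
to `i`). -/
def Crosses (d e : Sym2 (ZMod n)) : Prop :=
  ∃ i j k l : ZMod n, d = s(i, j) ∧ e = s(k, l) ∧ CcwBtw i k j ∧ CcwBtw j l i

/-- A triangulation: `n - 3` pairwise non-crossing diagonals. -/
def IsTriangulation (τ : Finset (Sym2 (ZMod n))) : Prop :=
  τ.card = n - 3 ∧ (∀ d ∈ τ, IsDiag d) ∧ ∀ d ∈ τ, ∀ e ∈ τ, ¬ Crosses d e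

/-- The length of the segment joining the two points indexed by `d`. -/
noncomputable def len (p : ZMod n → EuclideanSpace ℝ (Fin 2)) (d : Sym2 (ZMod n)) : ℝ :=
  Sym2.lift ⟨fun i j => ‖p i - p j‖, fun _ _ => norm_sub_rev _ _⟩ d

/-- `D(τ)`: the lengths of the diagonals of `τ` sorted in nondecreasing order. -/
noncomputable def sortedLengths (p : ZMod n → EuclideanSpace ℝ (Fin 2))
    (τ : Finset (Sym2 (ZMod n))) : List ℝ :=
  (τ.val.map (len p)).sort (· ≤ ·)

/-- Lexicographic order on lists of reals. -/
def lexLE (l l' : List ℝ) : Prop := l = l' ∨ List.Lex (· < ·) l l'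

/-- `τ` is length maximal: it is a triangulation whose sorted list of diagonal
lengths is greatest in the lexicographic order among all triangulations. -/
def LengthMaximal (p : ZMod n → EuclideanSpace ℝ (Fin 2))
    (τ : Finset (Sym2 (ZMod n))) : Prop :=
  IsTriangulation τ ∧
    ∀ τ' : Finset (Sym2 (ZMod n)), IsTriangulation τ' →
      lexLE (sortedLengths p τ') (sortedLengths p τ)

/-- A side of a triangle of `τ`: a chord, or a diagonal belonging to `τ`. -/
def IsSide (τ : Finset (Sym2 (ZMod n))) (d : Sym2 (ZMod n)) : Prop :=
  IsChord d ∨ d ∈ τ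

open scoped Classical in
/-- `A(τ)`: the `3(n-2)` angles of the triangles of `τ` sorted in nondecreasing
order.  Triangles are recorded as triples `a < b < c` (ordered by residue) all of
whose sides are chords or diagonals of `τ`, each contributing its three angles. -/
noncomputable def sortedAngles (p : ZMod n → EuclideanSpace ℝ (Fin 2))
    (τ : Finset (Sym2 (ZMod n))) : List ℝ :=
  ((Finset.univ.filter fun x : ZMod n × ZMod n × ZMod n =>
      x.1.val < x.2.1.val ∧ x.2.1.val < x.2.2.val ∧
      IsSide τ s(x.1, x.2.1) ∧ IsSide τ s(x.2.1, x.2.2) ∧ IsSide τ s(x.1, x.2.2)).val.bind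
    fun x =>
      {EuclideanGeometry.angle (p x.2.1) (p x.1) (p x.2.2),
       EuclideanGeometry.angle (p x.1) (p x.2.1) (p x.2.2),
       EuclideanGeometry.angle (p x.1) (p x.2.2) (p x.2.1)}).sort (· ≤ ·)

/-- `τ` is angle maximal: it is a triangulation whose sorted list of angles is
greatest in the lexicographic order among all triangulations. -/
def AngleMaximal (p : ZMod n → EuclideanSpace ℝ (Fin 2))
    (τ : Finset (Sym2 (ZMod n))) : Prop :=
  IsTriangulation τ ∧
    ∀ τ' : Finset (Sym2 (ZMod n)), IsTriangulation τ' →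
      lexLE (sortedAngles p τ') (sortedAngles p τ)

/-- The ear `e_i = {i-1, i+1}`. -/
def ear (i : ZMod n) : Sym2 (ZMod n) := s(i - 1, i + 1)

/-- `P` contains a symmetric quadruple: indices `i < j < k < l` with
`‖p i - p k‖ = ‖p j - p l‖`. -/
def HasSymQuad (p : ZMod n → EuclideanSpace ℝ (Fin 2)) : Prop :=
  ∃ i j k l : ZMod n, i.val < j.val ∧ j.val < k.val ∧ k.val < l.val ∧
    ‖p i - p k‖ = ‖p j - p l‖

/-! ### Non-crossing diagonals of a polygon cut open at a vertex -/

/-- A set of diagonals of the `n`-gon with vertices `0, …, n - 1`, each written as a pair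
`(x, y)` with `x < y`, no two of which cross. -/
structure NonCrossing (n : ℕ) (F : Finset (ℕ × ℕ)) : Prop where
  diag : ∀ q ∈ F, q.1 + 2 ≤ q.2 ∧ q.2 < n ∧ q.2 + 2 ≤ q.1 + n
  nc : ∀ q ∈ F, ∀ r ∈ F, ¬ (q.1 < r.1 ∧ r.1 < q.2 ∧ q.2 < r.2)

/-- Pairwise non-crossing diagonals number at most `n - 3`: sending each diagonal, and the side
`(0, n - 1)`, to the largest possible apex of a triangle below it is injective into the
`n - 2` vertices `1, …, n - 2`. -/
lemma NonCrossing.card_le {n : ℕ} (hn : 5 ≤ n) {F : Finset (ℕ × ℕ)} (h : NonCrossing n F) :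
    F.card ≤ n - 3 := by
  classical
  have hmem : ∀ q ∈ insert (0, n - 1) F, q.1 + 2 ≤ q.2 ∧ q.2 ≤ n - 1 := by
    intro q hq
    rcases Finset.mem_insert.1 hq with rfl | hq
    · simp; omega
    · have := h.diag q hq; omega
  have key : ∀ q ∈ insert (0, n - 1) F, ∃ c, q.1 < c ∧ c < q.2 ∧
      (c = q.1 + 1 ∨ (q.1, c) ∈ F) ∧ ∀ c', c' < q.2 → (q.1, c') ∈ F → c' ≤ c := by
    intro q hq
    have h1 := hmem q hq
    obtain ⟨c, hc, hmax⟩ := Finset.exists_max_image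
      ((Finset.range q.2).filter fun c => c = q.1 + 1 ∨ (q.1, c) ∈ F) id
      ⟨q.1 + 1, by simp; omega⟩
    simp only [Finset.mem_filter, Finset.mem_range, id] at hc hmax
    refine ⟨c, ?_, hc.1, hc.2, fun c' h2 h3 => hmax c' ⟨h2, Or.inr h3⟩⟩
    rcases hc.2 with h4 | h4
    · omega
    · have := h.diag _ h4
      simp only at this; omega
  choose! f hf using key
  have hcard : (insert (0, n - 1) F).card ≤ (Finset.Ioo 0 (n - 1)).card := by
    have inj : ∀ q ∈ insert (0, n - 1) F, ∀ r ∈ insert (0, n - 1) F, f q = f r → q.1 ≤ r.1 →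
        q.2 ≤ r.2 → q = r := by
      rintro ⟨a, b⟩ hq ⟨a', b'⟩ hr hfe hle hle2
      obtain ⟨h1, h2, h3, h4⟩ := hf _ hq
      obtain ⟨h1', h2', h3', h4'⟩ := hf _ hr
      simp only at *
      rcases Nat.lt_or_ge a a' with hlt | hge
      · exfalso
        have hr' : (a', b') ∈ F := by
          rcases Finset.mem_insert.1 hr with e | e
          · simp only [Prod.mk.injEq] at e; omega
          · exact e
        rcases h3 with h3 | h3
        · omega
        · exact h.nc _ h3 _ hr' (by simp only; omega)
      · have ha : a = a' := by omega
        subst ha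
        rcases Nat.lt_or_ge b b' with hlt | hge
        · exfalso
          have hq' : (a, b) ∈ F := by
            rcases Finset.mem_insert.1 hq with e | e
            · simp only [Prod.mk.injEq] at e
              have := (hmem _ hr).2; simp only at this; omega
            · exact e
          have := h4' b hlt hq'
          omega
        · have : b = b' := by omega
          rw [this]
    have inj2 : ∀ q ∈ insert (0, n - 1) F, ∀ r ∈ insert (0, n - 1) F, f q = f r → q.1 < r.1 →
        r.2 < q.2 → False := by
      rintro ⟨a, b⟩ hq ⟨a', b'⟩ hr hfe hle hle2
      obtain ⟨h1, h2, h3, h4⟩ := hf _ hq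
      obtain ⟨h1', h2', h3', h4'⟩ := hf _ hr
      simp only at *
      have hr' : (a', b') ∈ F := by
        rcases Finset.mem_insert.1 hr with e | e
        · simp only [Prod.mk.injEq] at e; omega
        · exact e
      rcases h3 with h3 | h3
      · omega
      · exact h.nc _ h3 _ hr' (by simp only; omega)
    refine Finset.card_le_card_of_injOn f ?_ ?_
    · intro q hq
      have h1 := hf q hq
      have h2 := hmem q hq
      simp only [Finset.coe_Ioo, Set.mem_Ioo]; omega
    · intro q hq r hr hfe
      simp only [Finset.mem_coe] at hq hr
      by_cases h1 : q.1 ≤ r.1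
      · by_cases h2 : q.2 ≤ r.2
        · exact inj q hq r hr hfe h1 h2
        · by_cases h3 : q.1 = r.1
          · exact (inj r hr q hq hfe.symm h3.ge (by omega)).symm
          · exact (inj2 q hq r hr hfe (by omega) (by omega)).elim
      · by_cases h2 : r.2 ≤ q.2
        · exact (inj r hr q hq hfe.symm (by omega) h2).symm
        · exact (inj2 r hr q hq hfe.symm (by omega) (by omega)).elim
  rw [Finset.card_insert_of_notMem, Nat.card_Ioo] at hcard
  · omega
  · intro h0
    have := h.diag _ h0
    simp only at this; omega

/-- A non-crossing set of the maximal size `n - 3` contains every diagonal that crosses none of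
its members. -/
lemma NonCrossing.mem_of_maximal {n : ℕ} (hn : 5 ≤ n) {F : Finset (ℕ × ℕ)}
    (h : NonCrossing n F) (hc : F.card = n - 3) {x y : ℕ}
    (hd : x + 2 ≤ y ∧ y < n ∧ y + 2 ≤ x + n)
    (h1 : ∀ r ∈ F, ¬ (x < r.1 ∧ r.1 < y ∧ y < r.2))
    (h2 : ∀ r ∈ F, ¬ (r.1 < x ∧ x < r.2 ∧ r.2 < y)) : (x, y) ∈ F := by
  classical
  by_contra hx
  have : NonCrossing n (insert (x, y) F) := by
    constructor
    · intro q hq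
      rcases Finset.mem_insert.1 hq with rfl | hq
      · exact hd
      · exact h.diag q hq
    · intro q hq r hr
      rcases Finset.mem_insert.1 hq with rfl | hq <;> rcases Finset.mem_insert.1 hr with rfl | hr
      · simp
      · exact h1 r hr
      · exact h2 q hq
      · exact h.nc q hq r hr
  have h3 := this.card_le hn
  rw [Finset.card_insert_of_notMem hx] at h3
  omega

/-- Below each diagonal of a triangulation there is an ear: some `(c - 1, c + 1)` whose tip `c` lies
strictly between the ends of the diagonal. Here `k` only serves the induction on the span. -/
lemma NonCrossing.exists_ear {n : ℕ} (hn : 5 ≤ n) {F : Finset (ℕ × ℕ)}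
    (h : NonCrossing n F) (hc : F.card = n - 3) (k : ℕ) :
    ∀ a b, b - a = k → (a, b) ∈ F → ∃ c, a < c ∧ c < b ∧ (c - 1, c + 1) ∈ F := by
  induction k using Nat.strong_induction_on with
  | _ k ih =>
  intro a b hk hab
  have hd := h.diag _ hab
  simp only at hd
  by_cases h2 : (a, a + 2) ∈ F
  · exact ⟨a + 1, by omega, by omega, by simpa using h2⟩
  have hb : b ≠ a + 2 := fun e => h2 (e ▸ hab)
  -- A diagonal crossing `(a, a + 2)` ends at `a + 1`, hence lies below `(a, b)`.
  have : ∃ y, a + 2 < y ∧ (a + 1, y) ∈ F := by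
    by_contra! hno
    refine h2 (h.mem_of_maximal hn hc (by omega) ?_ ?_)
    · rintro ⟨x, y⟩ hr ⟨h3, h4, h5⟩
      simp only at h3 h4 h5
      obtain rfl : x = a + 1 := by omega
      exact hno y h5 hr
    · rintro ⟨x, y⟩ hr ⟨h3, h4, h5⟩
      simp only at h3 h4 h5
      exact h.nc _ hr _ hab (by simp only; omega)
  obtain ⟨y, hy, hyF⟩ := this
  have hyb : y ≤ b := by
    by_contra hlt
    exact h.nc _ hab _ hyF (by simp only; omega)
  obtain ⟨c, h3, h4, h5⟩ := ih (y - (a + 1)) (by omega) (a + 1) y rfl hyF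
  exact ⟨c, by omega, by omega, h5⟩

/-! ### Triangulations of the cyclically labelled polygon -/

set_option linter.unusedSectionVars false

/-- The diagonals of `τ` as pairs `x < y` of labels, the vertices being relabelled
`0, …, n - 1` counterclockwise from the base vertex `b`. -/
def pairs (b : ZMod n) (τ : Finset (Sym2 (ZMod n))) : Finset (ℕ × ℕ) :=
  (Finset.range n ×ˢ Finset.range n).filter fun q =>
    q.1 < q.2 ∧ s(b + (q.1 : ZMod n), b + (q.2 : ZMod n)) ∈ τ

lemma mem_pairs {b : ZMod n} {τ : Finset (Sym2 (ZMod n))} {x y : ℕ} :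
    (x, y) ∈ pairs b τ ↔ x < y ∧ y < n ∧ s(b + (x : ZMod n), b + (y : ZMod n)) ∈ τ := by
  simp only [pairs, Finset.mem_filter, Finset.mem_product, Finset.mem_range]
  constructor
  · rintro ⟨⟨_, h2⟩, h3, h4⟩; exact ⟨h3, h2, h4⟩
  · rintro ⟨h1, h2, h3⟩; exact ⟨⟨by omega, h2⟩, h1, h3⟩

lemma cast_inj_of_lt {x y : ℕ} (hx : x < n) (hy : y < n) (h : (x : ZMod n) = y) : x = y := by
  have := congrArg ZMod.val h
  rwa [ZMod.val_cast_of_lt hx, ZMod.val_cast_of_lt hy] at this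

lemma val_sub_of_le {b : ZMod n} {x y : ℕ} (hxy : x ≤ y) (hy : y < n) :
    ((b + (y : ZMod n)) - (b + (x : ZMod n))).val = y - x := by
  rw [show (b + (y : ZMod n)) - (b + (x : ZMod n)) = ((y - x : ℕ) : ZMod n) by
    rw [Nat.cast_sub hxy]; ring]
  exact ZMod.val_cast_of_lt (by omega)

lemma val_sub_of_lt {b : ZMod n} {x y : ℕ} (hxy : x < y) (hy : y < n) :
    ((b + (x : ZMod n)) - (b + (y : ZMod n))).val = n + x - y := by
  rw [show (b + (x : ZMod n)) - (b + (y : ZMod n)) = ((n + x - y : ℕ) : ZMod n) by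
    rw [Nat.cast_sub (by omega)]; push_cast; simp]
  exact ZMod.val_cast_of_lt (by omega)

lemma image_pairs {τ : Finset (Sym2 (ZMod n))} (hd : ∀ d ∈ τ, IsDiag d) (b : ZMod n) :
    (pairs b τ).image (fun q => s(b + (q.1 : ZMod n), b + (q.2 : ZMod n))) = τ := by
  ext d
  rw [Finset.mem_image]
  constructor
  · rintro ⟨⟨x, y⟩, hq, rfl⟩
    exact (mem_pairs.1 hq).2.2
  · intro hdτ
    obtain ⟨i, j, rfl, _, hij, _⟩ := hd d hdτ
    have hi : b + (((i - b).val : ℕ) : ZMod n) = i := by simp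
    have hj : b + (((j - b).val : ℕ) : ZMod n) = j := by simp
    rcases lt_trichotomy (i - b).val (j - b).val with h | h | h
    · refine ⟨((i - b).val, (j - b).val), mem_pairs.2 ⟨h, ZMod.val_lt _, ?_⟩, ?_⟩
      · rwa [hi, hj]
      · simp only [hi, hj]
    · exact (hij (by rw [← hi, ← hj, h])).elim
    · refine ⟨((j - b).val, (i - b).val), mem_pairs.2 ⟨h, ZMod.val_lt _, ?_⟩, ?_⟩
      · rwa [hi, hj, Sym2.eq_swap]
      · simp only [hi, hj]; exact Sym2.eq_swap

lemma injOn_pairs (τ : Finset (Sym2 (ZMod n))) (b : ZMod n) :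
    Set.InjOn (fun q : ℕ × ℕ => s(b + (q.1 : ZMod n), b + (q.2 : ZMod n))) (pairs b τ) := by
  rintro ⟨x, y⟩ hq ⟨z, w⟩ hr h
  obtain ⟨h1, h2, _⟩ := mem_pairs.1 (Finset.mem_coe.1 hq)
  obtain ⟨h3, h4, _⟩ := mem_pairs.1 (Finset.mem_coe.1 hr)
  simp only [Sym2.eq_iff, add_right_inj] at h
  rcases h with ⟨h5, h6⟩ | ⟨h5, h6⟩
  · have := cast_inj_of_lt (by omega) (by omega) h5
    have := cast_inj_of_lt (by omega) (by omega) h6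
    simp; omega
  · have := cast_inj_of_lt (by omega) (by omega) h5
    have := cast_inj_of_lt (by omega) (by omega) h6
    omega

lemma card_pairs {τ : Finset (Sym2 (ZMod n))} (hτ : IsTriangulation τ) (b : ZMod n) :
    (pairs b τ).card = n - 3 := by
  rw [← hτ.1]
  conv_rhs => rw [← image_pairs hτ.2.1 b]
  rw [Finset.card_image_of_injOn (injOn_pairs τ b)]

lemma nonCrossing_pairs {τ : Finset (Sym2 (ZMod n))} (hτ : IsTriangulation τ) (b : ZMod n) :
    NonCrossing n (pairs b τ) := by
  constructor
  · rintro ⟨x, y⟩ hq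
    obtain ⟨h1, h2, h3⟩ := mem_pairs.1 hq
    obtain ⟨i, j, he, h4, h5, h6⟩ := hτ.2.1 _ h3
    have key : ∀ x y : ℕ, y = x + 1 → x < y → y < n → ∀ i j : ZMod n,
        s(b + (x : ZMod n), b + (y : ZMod n)) = s(i, j) → j = i - 1 ∨ j = i + 1 := by
      rintro x y rfl - - i j he
      rw [Sym2.eq_iff] at he
      push_cast at he
      rcases he with ⟨rfl, rfl⟩ | ⟨rfl, rfl⟩
      · right; ring
      · left; ring
    have key2 : y + 1 = x + n → j = i - 1 ∨ j = i + 1 := by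
      intro e
      have e' : (y : ZMod n) = x - 1 := by
        have := congrArg (Nat.cast : ℕ → ZMod n) e
        push_cast at this
        rw [ZMod.natCast_self] at this
        linear_combination this
      rw [Sym2.eq_iff, e'] at he
      rcases he with ⟨rfl, rfl⟩ | ⟨rfl, rfl⟩
      · left; ring
      · right; ring
    simp only
    refine ⟨?_, h2, ?_⟩
    · by_contra hlt
      rcases key x y (by omega) h1 h2 i j he with h | h
      · exact h4 h
      · exact h6 h
    · by_contra hlt
      rcases key2 (by omega) with h | h
      · exact h4 h
      · exact h6 h
  · rintro ⟨x, y⟩ hq ⟨z, w⟩ hr ⟨h1, h2, h3⟩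
    simp only at h1 h2 h3
    obtain ⟨_, h5, h6⟩ := mem_pairs.1 hq
    obtain ⟨_, h8, h9⟩ := mem_pairs.1 hr
    refine hτ.2.2 _ h6 _ h9 ⟨_, _, _, _, rfl, rfl, ⟨?_, ?_⟩, ?_, ?_⟩
    · rw [val_sub_of_le h1.le (by omega)]; omega
    · rw [val_sub_of_le h1.le (by omega), val_sub_of_le (by omega) (by omega)]; omega
    · rw [val_sub_of_le h3.le (by omega)]; omega
    · rw [val_sub_of_le h3.le (by omega), val_sub_of_lt (by omega) (by omega)]; omega

/-- Whatever the base `b`, every diagonal has an ear of `τ` on the side avoiding `b`. -/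
lemma exists_ear_above {τ : Finset (Sym2 (ZMod n))} (hn : 5 ≤ n) (hτ : IsTriangulation τ)
    {b : ZMod n} {x y : ℕ} (h : (x, y) ∈ pairs b τ) :
    ∃ c, x < c ∧ c < y ∧ ear (b + (c : ZMod n)) ∈ τ := by
  obtain ⟨c, h1, h2, h3⟩ :=
    (nonCrossing_pairs hτ b).exists_ear hn (card_pairs hτ b) _ x y rfl h
  refine ⟨c, h1, h2, ?_⟩
  have := (mem_pairs.1 h3).2.2
  rw [Nat.cast_sub (by omega)] at this
  push_cast at this
  rwa [ear, add_sub_assoc, add_assoc]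

lemma add_cast_ne_self {b : ZMod n} {c : ℕ} (h0 : 0 < c) (h1 : c < n) : b + (c : ZMod n) ≠ b := by
  intro h
  have h2 : (c : ZMod n) = ((0 : ℕ) : ZMod n) := by simpa using h
  have := cast_inj_of_lt h1 (by omega) h2
  omega

lemma exists_ear_ne {τ : Finset (Sym2 (ZMod n))} (hn : 5 ≤ n) (hτ : IsTriangulation τ)
    (b : ZMod n) : ∃ i, i ≠ b ∧ ear i ∈ τ := by
  have hne : (pairs b τ).Nonempty := by
    rw [← Finset.card_pos, card_pairs hτ b]; omega
  obtain ⟨⟨x, y⟩, h⟩ := hne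
  obtain ⟨c, h1, h2, h3⟩ := exists_ear_above hn hτ h
  have := (mem_pairs.1 h).2.1
  exact ⟨_, add_cast_ne_self (by omega) (by omega), h3⟩

lemma two_le_ears {τ : Finset (Sym2 (ZMod n))} (hn : 5 ≤ n) (hτ : IsTriangulation τ) :
    2 ≤ (Finset.univ.filter fun i : ZMod n => ear i ∈ τ).card := by
  obtain ⟨i, _, hi⟩ := exists_ear_ne hn hτ 0
  obtain ⟨j, hij, hj⟩ := exists_ear_ne hn hτ i
  exact Finset.one_lt_card.2 ⟨j, by simpa using hj, i, by simpa using hi, hij⟩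

/-- With exactly two ears and the base at one of them, all diagonals separate the two ears,
so they are nested and their spans `y - x` run exactly once through `2, …, n - 2`. -/
lemma exists_spans {τ : Finset (Sym2 (ZMod n))} (hn : 5 ≤ n) (hτ : IsTriangulation τ)
    (h2 : (Finset.univ.filter fun i : ZMod n => ear i ∈ τ).card = 2) :
    ∃ b : ZMod n, Set.InjOn (fun q : ℕ × ℕ => q.2 - q.1) (pairs b τ) ∧
      (pairs b τ).image (fun q => q.2 - q.1) = Finset.Icc 2 (n - 2) := by
  obtain ⟨c₁, b, hne, hears⟩ := Finset.card_eq_two.1 h2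
  have hm : ∀ x y, (x, y) ∈ pairs b τ → x < (c₁ - b).val ∧ (c₁ - b).val < y := by
    intro x y h
    obtain ⟨c, h3, h4, h5⟩ := exists_ear_above hn hτ h
    have hy := (mem_pairs.1 h).2.1
    have h6 : b + (c : ZMod n) ∈ ({c₁, b} : Finset (ZMod n)) := by
      rw [← hears]; simpa using h5
    rw [Finset.mem_insert, Finset.mem_singleton] at h6
    rcases h6 with h6 | h6
    · rw [← h6, add_sub_cancel_left, ZMod.val_cast_of_lt (by omega)]
      exact ⟨h3, h4⟩
    · exact (add_cast_ne_self (by omega) (by omega) h6).elim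
  have hNC := nonCrossing_pairs hτ b
  have hinj : Set.InjOn (fun q : ℕ × ℕ => q.2 - q.1) (pairs b τ) := by
    rintro ⟨x, y⟩ hq ⟨z, w⟩ hr h
    rw [Finset.mem_coe] at hq hr
    have h3 := hm _ _ hq
    have h4 := hm _ _ hr
    have h5 := hNC.nc _ hq _ hr
    have h6 := hNC.nc _ hr _ hq
    simp only at h h5 h6
    rw [Prod.mk.injEq]
    omega
  refine ⟨b, hinj, Finset.eq_of_subset_of_card_le ?_ ?_⟩
  · intro k hk
    obtain ⟨⟨x, y⟩, hq, rfl⟩ := Finset.mem_image.1 hk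
    have := hNC.diag _ hq
    simp only [Finset.mem_Icc] at this ⊢
    omega
  · rw [Finset.card_image_of_injOn hinj, card_pairs hτ b, Nat.card_Icc]; omega

/-! ### Lengths -/

lemma norm_pt_sub (α β : ℝ) : ‖pt α - pt β‖ = 2 * |Real.sin ((β - α) / 2)| := by
  rw [EuclideanSpace.norm_eq, Real.sqrt_eq_iff_mul_self_eq (by positivity) (by positivity)]
  simp only [pt, Fin.sum_univ_two, Real.norm_eq_abs, sq_abs]
  simp only [WithLp.equiv_symm_apply, PiLp.sub_apply, Matrix.cons_val_zero, Matrix.cons_val_one]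
  have h1 : Real.cos α - Real.cos β = _ := Real.cos_sub_cos α β
  have h2 : Real.sin α - Real.sin β = _ := Real.sin_sub_sin α β
  rw [h1, h2]
  have h3 : Real.sin ((β - α) / 2) = - Real.sin ((α - β) / 2) := by
    rw [← Real.sin_neg]; congr 1; ring
  rw [h3, abs_neg, mul_mul_mul_comm, abs_mul_abs_self]
  have := Real.sin_sq_add_cos_sq ((α + β) / 2)
  linear_combination (4 * Real.sin ((α - β) / 2) ^ 2) * this

lemma pt_val (m : ℕ) : pt (2 * Real.pi * ((m : ZMod n).val : ℝ) / n) = pt (2 * Real.pi * m / n) := by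
  have hn : (n : ℝ) ≠ 0 := by exact_mod_cast NeZero.ne n
  have h : 2 * Real.pi * m / n =
      2 * Real.pi * ((m : ZMod n).val : ℝ) / n + ((m / n : ℕ) : ℝ) * (2 * Real.pi) := by
    rw [ZMod.val_natCast]
    have : (m : ℝ) = ((m % n : ℕ) : ℝ) + n * ((m / n : ℕ) : ℝ) := by
      exact_mod_cast (Nat.mod_add_div m n).symm
    rw [this]
    field_simp
  rw [h]
  simp only [pt, Real.cos_add_nat_mul_two_pi, Real.sin_add_nat_mul_two_pi]

lemma len_add {p : ZMod n → EuclideanSpace ℝ (Fin 2)}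
    (hp : ∀ i : ZMod n, p i = pt (2 * Real.pi * i.val / n)) (i : ZMod n) {k : ℕ}
    (hk : k ≤ n) : len p s(i, i + (k : ZMod n)) = 2 * Real.sin (Real.pi * k / n) := by
  have hn : (0 : ℝ) < n := by exact_mod_cast NeZero.pos n
  have hi : i + (k : ZMod n) = ((i.val + k : ℕ) : ZMod n) := by simp
  change ‖p i - p (i + (k : ZMod n))‖ = _
  rw [hp, hp, hi, pt_val, norm_pt_sub]
  have : (2 * Real.pi * ((i.val + k : ℕ) : ℝ) / n - 2 * Real.pi * (i.val : ℝ) / n) / 2 =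
      Real.pi * k / n := by
    push_cast; field_simp; ring
  rw [this, abs_of_nonneg]
  apply Real.sin_nonneg_of_nonneg_of_le_pi
  · positivity
  · rw [div_le_iff₀ hn]
    have : (k : ℝ) ≤ n := by exact_mod_cast hk
    nlinarith [Real.pi_pos]

lemma sin_lt_aux {k : ℕ} (h2 : 2 < k) (hk : 2 * k ≤ n) :
    Real.sin (Real.pi * (2 : ℕ) / n) < Real.sin (Real.pi * k / n) := by
  have hn : (0 : ℝ) < n := by exact_mod_cast NeZero.pos n
  have h2' : (2 : ℝ) < k := by exact_mod_cast h2
  have hk' : 2 * (k : ℝ) ≤ n := by exact_mod_cast hk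
  apply Real.sin_lt_sin_of_lt_of_le_pi_div_two
  · have : 0 ≤ Real.pi * (2 : ℕ) / n := by positivity
    linarith [Real.pi_pos]
  · rw [div_le_div_iff₀ hn two_pos]
    nlinarith [Real.pi_pos]
  · rw [div_lt_div_iff_of_pos_right hn]
    push_cast
    nlinarith [Real.pi_pos]

lemma sin_reflect {k : ℕ} (hk : k ≤ n) :
    Real.sin (Real.pi * (n - k : ℕ) / n) = Real.sin (Real.pi * k / n) := by
  have hn : (n : ℝ) ≠ 0 := by exact_mod_cast NeZero.ne n
  rw [← Real.sin_pi_sub]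
  congr 1
  rw [Nat.cast_sub hk]
  field_simp
  ring

/-- Ears are strictly shorter than all the other diagonals. -/
lemma sin_lt {k : ℕ} (h2 : 2 < k) (hk : k + 2 < n) :
    Real.sin (Real.pi * (2 : ℕ) / n) < Real.sin (Real.pi * k / n) := by
  rcases Nat.le_total (2 * k) n with h | h
  · exact sin_lt_aux h2 h
  · rw [← sin_reflect (k := k) (by omega)]
    exact sin_lt_aux (by omega) (by omega)

lemma len_ear (hn : 5 ≤ n) {p : ZMod n → EuclideanSpace ℝ (Fin 2)}
    (hp : ∀ i : ZMod n, p i = pt (2 * Real.pi * i.val / n))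
    (i : ZMod n) : len p (ear i) = 2 * Real.sin (Real.pi * (2 : ℕ) / n) := by
  have : ear i = s(i - 1, (i - 1) + ((2 : ℕ) : ZMod n)) := by
    rw [ear, show i - 1 + ((2 : ℕ) : ZMod n) = i + 1 by push_cast; ring]
  rw [this, len_add hp _ (by omega)]

/-- A diagonal of `τ` is an ear or is longer than the ears. -/
lemma ear_or_lt {p : ZMod n → EuclideanSpace ℝ (Fin 2)}
    (hp : ∀ i : ZMod n, p i = pt (2 * Real.pi * i.val / n))
    {τ : Finset (Sym2 (ZMod n))} (hτ : IsTriangulation τ) {d : Sym2 (ZMod n)} (hd : d ∈ τ) :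
    (∃ i, d = ear i) ∨ 2 * Real.sin (Real.pi * (2 : ℕ) / n) < len p d := by
  rw [← image_pairs hτ.2.1 0] at hd
  obtain ⟨⟨x, y⟩, hq, rfl⟩ := Finset.mem_image.1 hd
  have h := (nonCrossing_pairs hτ 0).diag _ hq
  simp only [zero_add] at h ⊢
  by_cases h1 : y = x + 2
  · left
    refine ⟨(x : ZMod n) + 1, ?_⟩
    subst h1
    rw [ear]; congr 2 <;> push_cast <;> ring
  by_cases h2 : y + 2 = x + n
  · left
    refine ⟨(y : ZMod n) + 1, ?_⟩
    have : (x : ZMod n) = y + 2 := by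
      have := congrArg (Nat.cast : ℕ → ZMod n) h2
      push_cast at this
      rw [ZMod.natCast_self] at this
      linear_combination -this
    rw [ear, Sym2.eq_swap, this, add_sub_cancel_right, add_assoc, one_add_one_eq_two]
  right
  have hy : (y : ZMod n) = (x : ZMod n) + ((y - x : ℕ) : ZMod n) := by
    rw [Nat.cast_sub (by omega)]; ring
  rw [hy, len_add hp _ (by omega)]
  linarith [sin_lt (n := n) (k := y - x) (by omega) (by omega)]

lemma ear_injective (hn : 5 ≤ n) : Function.Injective (ear : ZMod n → Sym2 (ZMod n)) := by
  intro i j h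
  rw [ear, ear, Sym2.eq_iff] at h
  rcases h with ⟨h, _⟩ | ⟨h1, h2⟩
  · linear_combination h
  · have h4 : ((4 : ℕ) : ZMod n) = ((0 : ℕ) : ZMod n) := by
      push_cast; linear_combination h2 - h1
    have := cast_inj_of_lt (by omega) (by omega) h4
    omega

lemma count_ear_length (hn : 5 ≤ n) {p : ZMod n → EuclideanSpace ℝ (Fin 2)}
    (hp : ∀ i : ZMod n, p i = pt (2 * Real.pi * i.val / n))
    {τ : Finset (Sym2 (ZMod n))} (hτ : IsTriangulation τ) :
    (sortedLengths p τ).count (2 * Real.sin (Real.pi * (2 : ℕ) / n)) =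
      (Finset.univ.filter fun i : ZMod n => ear i ∈ τ).card := by
  classical
  rw [sortedLengths, ← Multiset.coe_count, Multiset.sort_eq, Multiset.count_map,
    ← Finset.card_image_of_injective _ (ear_injective hn)]
  change (τ.filter fun d => 2 * Real.sin (Real.pi * (2 : ℕ) / n) = len p d).card = _
  congr 1
  ext d
  simp only [Finset.mem_filter, Finset.mem_image, Finset.mem_univ, true_and]
  constructor
  · rintro ⟨hd, he⟩
    rcases ear_or_lt hp hτ hd with ⟨i, rfl⟩ | h
    · exact ⟨i, hd, rfl⟩
    · exact absurd he h.ne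
  · rintro ⟨i, hi, rfl⟩
    exact ⟨hi, (len_ear hn hp i).symm⟩

lemma le_of_mem_sortedLengths (hn : 5 ≤ n) {p : ZMod n → EuclideanSpace ℝ (Fin 2)}
    (hp : ∀ i : ZMod n, p i = pt (2 * Real.pi * i.val / n))
    {τ : Finset (Sym2 (ZMod n))} (hτ : IsTriangulation τ) :
    ∀ x ∈ sortedLengths p τ, 2 * Real.sin (Real.pi * (2 : ℕ) / n) ≤ x := by
  intro x hx
  rw [sortedLengths, Multiset.mem_sort, Multiset.mem_map] at hx
  obtain ⟨d, hd, rfl⟩ := hx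
  rcases ear_or_lt hp hτ hd with ⟨i, rfl⟩ | h
  · exact (len_ear hn hp i).ge
  · exact h.le

/-- Among sorted lists of equal length bounded below by `m`, more copies of `m` make a list
lexicographically smaller. -/
lemma lex_of_count_lt (m : ℝ) : ∀ l l' : List ℝ, l.length = l'.length →
    l.Pairwise (· ≤ ·) → (∀ x ∈ l, m ≤ x) → (∀ x ∈ l', m ≤ x) → l'.count m < l.count m →
    List.Lex (· < ·) l l'
  | [], l', _, _, _, _, h => by simp at h
  | a :: l, [], h, _, _, _, _ => by simp at h
  | a :: l, b :: l', hl, hs, h1, h2, hc => by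
    rw [List.pairwise_cons] at hs
    have ha : a = m := by
      by_contra hne
      have hlt : m < a := lt_of_le_of_ne (h1 a (by simp)) (Ne.symm hne)
      have : (a :: l).count m = 0 := by
        rw [List.count_eq_zero]
        intro hm
        rcases List.mem_cons.1 hm with h | h
        · exact hne h.symm
        · exact absurd (hs.1 m h) (not_le.2 hlt)
      omega
    by_cases hb : b = m
    · subst ha; subst hb
      refine List.Lex.cons (lex_of_count_lt _ l l' (by simpa using hl) hs.2
        (fun x hx => h1 x (by simp [hx])) (fun x hx => h2 x (by simp [hx])) ?_)
      simpa using hc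
    · rw [ha]
      exact List.Lex.rel (lt_of_le_of_ne (h2 b (by simp)) (Ne.symm hb))

lemma lex_of_ears_lt (hn : 5 ≤ n) {p : ZMod n → EuclideanSpace ℝ (Fin 2)}
    (hp : ∀ i : ZMod n, p i = pt (2 * Real.pi * i.val / n))
    {τ τ' : Finset (Sym2 (ZMod n))} (hτ : IsTriangulation τ) (hτ' : IsTriangulation τ')
    (h : (Finset.univ.filter fun i : ZMod n => ear i ∈ τ').card <
      (Finset.univ.filter fun i : ZMod n => ear i ∈ τ).card) :
    List.Lex (· < ·) (sortedLengths p τ) (sortedLengths p τ') := by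
  refine lex_of_count_lt (2 * Real.sin (Real.pi * (2 : ℕ) / n)) _ _ ?_ ?_
    (le_of_mem_sortedLengths hn hp hτ) (le_of_mem_sortedLengths hn hp hτ') ?_
  · simp only [sortedLengths, Multiset.length_sort, Multiset.card_map, Finset.card_val]
    rw [hτ.1, hτ'.1]
  · exact Multiset.pairwise_sort _ _
  · rwa [count_ear_length hn hp hτ, count_ear_length hn hp hτ']

/-- The lengths of a triangulation with two ears do not depend on the triangulation. -/
lemma sortedLengths_of_two_ears (hn : 5 ≤ n) {p : ZMod n → EuclideanSpace ℝ (Fin 2)}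
    (hp : ∀ i : ZMod n, p i = pt (2 * Real.pi * i.val / n))
    {τ : Finset (Sym2 (ZMod n))} (hτ : IsTriangulation τ)
    (h2 : (Finset.univ.filter fun i : ZMod n => ear i ∈ τ).card = 2) :
    sortedLengths p τ = ((Finset.Icc 2 (n - 2)).val.map
      fun k : ℕ => 2 * Real.sin (Real.pi * k / n)).sort (· ≤ ·) := by
  obtain ⟨b, hinj, himg⟩ := exists_spans hn hτ h2
  have hval : τ.val.map (len p) = (Finset.Icc 2 (n - 2)).val.map
      fun k : ℕ => 2 * Real.sin (Real.pi * k / n) := by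
    rw [← himg, Finset.image_val_of_injOn hinj]
    conv_lhs => rw [← image_pairs hτ.2.1 b, Finset.image_val_of_injOn (injOn_pairs τ b)]
    rw [Multiset.map_map, Multiset.map_map]
    refine Multiset.map_congr rfl ?_
    rintro ⟨x, y⟩ hq
    have h := mem_pairs.1 (Finset.mem_def.2 hq)
    have hy : b + (y : ZMod n) = b + (x : ZMod n) + ((y - x : ℕ) : ZMod n) := by
      rw [Nat.cast_sub (by omega)]; ring
    simp only [Function.comp]
    rw [hy, len_add hp _ (by omega)]
  rw [sortedLengths, hval]

/-! ### The fan triangulation -/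

variable (n) in
/-- The triangulation by all diagonals through the vertex `0`. -/
def fan : Finset (Sym2 (ZMod n)) :=
  (Finset.Icc 2 (n - 2)).image fun k : ℕ => s((0 : ZMod n), (k : ZMod n))

lemma mem_fan {d : Sym2 (ZMod n)} :
    d ∈ fan n ↔ ∃ k : ℕ, 2 ≤ k ∧ k ≤ n - 2 ∧ d = s((0 : ZMod n), (k : ZMod n)) := by
  simp only [fan, Finset.mem_image, Finset.mem_Icc]
  constructor
  · rintro ⟨k, ⟨h1, h2⟩, rfl⟩; exact ⟨k, h1, h2, rfl⟩
  · rintro ⟨k, h1, h2, rfl⟩; exact ⟨k, ⟨h1, h2⟩, rfl⟩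

lemma isTriangulation_fan (hn : 5 ≤ n) : IsTriangulation (fan n) := by
  refine ⟨?_, ?_, ?_⟩
  · rw [fan, Finset.card_image_of_injOn, Nat.card_Icc]
    · omega
    · intro k hk l hl h
      simp only [Finset.coe_Icc, Set.mem_Icc] at hk hl
      simp only [Sym2.eq_iff, true_and] at h
      rcases h with h | ⟨h, h'⟩
      · exact cast_inj_of_lt (by omega) (by omega) h
      · exact cast_inj_of_lt (by omega) (by omega) (h'.trans h)
  · intro d hd
    obtain ⟨k, h1, h2, rfl⟩ := mem_fan.1 hd
    refine ⟨0, k, rfl, ?_, ?_, ?_⟩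
    · intro h
      have h3 : ((k + 1 : ℕ) : ZMod n) = ((0 : ℕ) : ZMod n) := by push_cast; rw [h]; ring
      have := cast_inj_of_lt (by omega) (by omega) h3
      omega
    · intro h
      have h3 : (k : ZMod n) = ((0 : ℕ) : ZMod n) := by push_cast; exact h
      have := cast_inj_of_lt (by omega) (by omega) h3
      omega
    · intro h
      have h3 : (k : ZMod n) = ((1 : ℕ) : ZMod n) := by push_cast; rw [h]; ring
      have := cast_inj_of_lt (by omega) (by omega) h3
      omega
  · rintro d hd e he ⟨i, j, k, l, rfl, rfl, ⟨h1, h2⟩, h3, h4⟩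
    obtain ⟨x, _, _, hx⟩ := mem_fan.1 hd
    obtain ⟨y, _, _, hy⟩ := mem_fan.1 he
    rw [Sym2.eq_iff] at hx hy
    -- Crossing pairs have no common end, whereas here both contain `0`.
    have hki : k ≠ i := by rintro rfl; simp at h1
    have hkj : k ≠ j := by rintro rfl; simp at h2
    have hlj : l ≠ j := by rintro rfl; simp at h3
    have hli : l ≠ i := by rintro rfl; simp at h4
    rcases hx with ⟨a, _⟩ | ⟨_, a⟩ <;> rcases hy with ⟨c, _⟩ | ⟨_, c⟩
    · exact hki (c.trans a.symm)
    · exact hli (c.trans a.symm)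
    · exact hkj (c.trans a.symm)
    · exact hlj (c.trans a.symm)

lemma card_ears_fan (hn : 5 ≤ n) :
    (Finset.univ.filter fun i : ZMod n => ear i ∈ fan n).card = 2 := by
  refine le_antisymm ?_ (two_le_ears hn (isTriangulation_fan hn))
  refine le_trans (Finset.card_le_card (t := {1, -1}) ?_) Finset.card_le_two
  intro i hi
  simp only [Finset.mem_filter, Finset.mem_univ, true_and] at hi
  obtain ⟨k, _, _, h⟩ := mem_fan.1 hi
  rw [ear, Sym2.eq_iff] at h
  rw [Finset.mem_insert, Finset.mem_singleton]
  rcases h with ⟨h, _⟩ | ⟨_, h⟩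
  · left; linear_combination h
  · right; linear_combination h

/-! ### Length maximality -/

theorem stmt8 {n : ℕ} [NeZero n] (hn : 5 ≤ n)
    (p : ZMod n → EuclideanSpace ℝ (Fin 2))
    (hp : ∀ i : ZMod n, p i = pt (2 * Real.pi * i.val / n))
    :
    (∀ τ : Finset (Sym2 (ZMod n)), IsTriangulation τ →
      (LengthMaximal p τ ↔ (Finset.univ.filter fun i : ZMod n => ear i ∈ τ).card = 2)) ∧
    (∀ τ τ' : Finset (Sym2 (ZMod n)), IsTriangulation τ → IsTriangulation τ' →
      (Finset.univ.filter fun i : ZMod n => ear i ∈ τ).card = 2 →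
      (Finset.univ.filter fun i : ZMod n => ear i ∈ τ').card = 2 →
      sortedLengths p τ = sortedLengths p τ') := by
  have same : ∀ τ τ' : Finset (Sym2 (ZMod n)), IsTriangulation τ → IsTriangulation τ' →
      (Finset.univ.filter fun i : ZMod n => ear i ∈ τ).card = 2 →
      (Finset.univ.filter fun i : ZMod n => ear i ∈ τ').card = 2 →
      sortedLengths p τ = sortedLengths p τ' := fun τ τ' hτ hτ' h h' => by
    rw [sortedLengths_of_two_ears hn hp hτ h, sortedLengths_of_two_ears hn hp hτ' h']
  refine ⟨fun τ hτ => ⟨fun hmax => ?_, fun h2 => ⟨hτ, fun τ' hτ' => ?_⟩⟩, same⟩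
  · by_contra hne
    have hlt := lex_of_ears_lt hn hp hτ (isTriangulation_fan hn) (by
      rw [card_ears_fan hn]
      have := two_le_ears hn hτ
      omega)
    rcases hmax.2 _ (isTriangulation_fan hn) with h | h
    · rw [h] at hlt
      exact irrefl_of (List.Lex (· < ·)) _ hlt
    · exact asymm_of (List.Lex (· < ·)) hlt h
  · rcases (two_le_ears hn hτ').eq_or_lt with h | h
    · exact Or.inl (same _ _ hτ' hτ h.symm h2)
    · exact Or.inr (lex_of_ears_lt hn hp hτ' hτ (by rw [h2]; exact h))
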